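/- Let (A,ω,τ,G) be an ergodic C*-dynamical system (with K = G a group) with ω tracial, such that the product map p : G × G → G, (g,h) ↦ gh, is measurable and (g,h) ↦ ω(τ_h(a₁) τ_g(a₂) τ_{gh}(a₃) τ_g(a₄) τ_h(a₅)) is (Σ × Σ)-measurable for all a₁,...,a₅ ∈ A. Let (Λ_{1α}) and (Λ_{2α}) be Følner nets in G, indexed by the same directed set, such that (Λ_{1α}⁻¹Λ_{1α}) and (Λ_{2α}⁻¹Λ_{2α}) are also Følner nets in G. Fix a GNS representation of (A,ω) and a, b, c ∈ A with at least one of ι(a), ι(b), ι(c*) in H_v; set x_{g,h} := ι(τ_{gh}(a) τ_g(b) τ_h(c)) and γ_{g',h'} := lim_α (1/(μ(Λ_{1α})μ(Λ_{2α}))) ∫_{Λ_{1α}} ∫_{Λ_{2α}} ⟨x_{g,h}, x_{gg',hh'}⟩ dg dh. If (A,ω,τ,G) is asymptotically abelian with respect to (Λ_{1α}), then γ_{g',h'} = ω(a* τ_{g'h'}(a)) ω(b* τ_{g'}(b)) ω(τ_{h'}(c) c*) for all g', h' ∈ G, giving a (Σ × Σ)-measurable map (g,h) ↦ γ_{g,h},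 and lim_α (1/(μ(Λ_{1α}⁻¹Λ_{1α})μ(Λ_{2α}⁻¹Λ_{2α}))) ∫_{Λ_{1α}⁻¹Λ_{1α}} ∫_{Λ_{2α}⁻¹Λ_{2α}} |γ_{g,h}| dg dh = 0. -/

import Mathlib

open Filter Topology
open scoped Pointwise ComplexOrder

/-- A Følner net in a (sub)semigroup `K` of a measure group `(G, Σ, μ)`. -/
structure FolnerNetIn {G : Type*} [Group G] [MeasurableSpace G]
    (μ : MeasureTheory.Measure G) (K : Set G) where
  idx : Type
  [pre : Preorder idx]
  [ne : Nonempty idx]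
  [dir : IsDirected idx (· ≤ ·)]
  Lam : idx → Set G
  meas : ∀ α, MeasurableSet (Lam α) ∧ Lam α ⊆ K
  fin : ∀ᶠ α in atTop, 0 < μ (Lam α) ∧ μ (Lam α) < ⊤
  folner : ∀ g ∈ K, Tendsto
    (fun α => (μ (symmDiff (Lam α) (Lam α * {g}))).toReal / (μ (Lam α)).toReal)
    atTop (𝓝 0)

attribute [instance] FolnerNetIn.pre FolnerNetIn.ne FolnerNetIn.dir

open MeasureTheory

/-- Ergodicity of `(A, ω, τ, G)` along a Følner net. -/
def FolnerNetIn.ErgodicAlong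
    {A : Type*} [NormedRing A] [StarRing A] [CStarRing A] [NormedAlgebra ℂ A]
    [CompleteSpace A] [StarModule ℂ A]
    {G : Type*} [CommGroup G] [MeasurableSpace G] {μ : Measure G} {K : Set G}
    (F : FolnerNetIn μ K) (ω : A →ₗ[ℂ] ℂ) (τ : G → A ≃⋆ₐ[ℂ] A) : Prop :=
  ∀ a b : A,
    Tendsto (fun α => (μ (F.Lam α)).toReal⁻¹ • ∫ g in F.Lam α, ω (a * τ g b) ∂μ)
      atTop (𝓝 (ω a * ω b))

/-- The space `H_v` of flight vectors: the orthogonal complement of the closed span `H₀` of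
the unimodular eigenvectors of the semigroup `S = {U g : g ∈ G}` of contractions. -/
noncomputable def flightVectors {G H : Type*} [NormedAddCommGroup H]
    [InnerProductSpace ℂ H] (U : G → H →L[ℂ] H) : Submodule ℂ H :=
  ((Submodule.span ℂ {x : H | x ≠ 0 ∧ ∃ lam : G → ℂ,
      ∀ g, ‖lam g‖ = 1 ∧ U g x = lam g • x}).topologicalClosure)ᗮ

/-!
A functional on `H ⊗ H̄` invariant under `U ⊗ Ū` is represented by a compact operator commuting
with `U`, and such an operator kills flight vectors: the nonzero eigenspaces of its absolute square
are finite-dimensional and `U`-invariant, hence spanned by joint eigenvectors. The mean ergodic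
theorem in `H ⊗ H̄` therefore makes the averages of `|⟪v, U_g x⟫|` vanish for a flight vector `x`,
uniformly for `v` in the unit ball; the uniformity absorbs the shift by `h` in `⟪a, U_{gh} a⟫`.

For the limit formula, traciality turns the five-fold correlation into `ω(τ_g(z_h) c)` with `z_h`
bounded, so the mean ergodic theorem, uniform over bounded `z`, evaluates first the inner average
and then the outer one.
-/

section Averages

variable {G : Type*} [Group G] [MeasurableSpace G] {ι : Type*} {l : Filter ι}

/-- A net of measures on a group that are eventually probability measures and asymptotically
invariant under right translations, uniformly over bounded measurable functions. -/
structure IsReiterNet (l : Filter ι) (ν : ι → Measure G) : Prop where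
  isProbabilityMeasure : ∀ᶠ α in l, IsProbabilityMeasure (ν α)
  translate : ∀ k : G, ∀ ε > 0, ∀ᶠ α in l, ∀ (f : G → ℂ) (C : ℝ), Measurable f →
    (∀ g, ‖f g‖ ≤ C) → ‖∫ g, f (g * k) ∂ν α - ∫ g, f g ∂ν α‖ ≤ ε * C

/-- A Følner net of sets, indexed along an arbitrary filter. -/
structure IsFolnerNet (μ : Measure G) (l : Filter ι) (Λ : ι → Set G) : Prop where
  measurableSet : ∀ᶠ α in l, MeasurableSet (Λ α)
  measure_pos_lt_top : ∀ᶠ α in l, 0 < μ (Λ α) ∧ μ (Λ α) < ⊤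
  tendsto : ∀ k : G, Tendsto
    (fun α => (μ (symmDiff (Λ α) (Λ α * {k}))).toReal / (μ (Λ α)).toReal) l (𝓝 0)

theorem norm_setIntegral_sub_setIntegral_le {X : Type*} [MeasurableSpace X] {μ : Measure X}
    {s t : Set X} (hs : MeasurableSet s) (ht : MeasurableSet t) (hsμ : μ s ≠ ⊤) (htμ : μ t ≠ ⊤)
    {f : X → ℂ} (hf : Measurable f) {C : ℝ} (hC : ∀ x, ‖f x‖ ≤ C) :
    ‖∫ x in s, f x ∂μ - ∫ x in t, f x ∂μ‖ ≤ C * μ.real (symmDiff s t) := by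
  have hint : ∀ u, μ u ≠ ⊤ → IntegrableOn f u μ := fun u hu =>
    .of_bound hu.lt_top hf.aestronglyMeasurable C (.of_forall hC)
  have hdiff : ∀ u v, μ u ≠ ⊤ → ‖∫ x in u \ v, f x ∂μ‖ ≤ C * μ.real (u \ v) := fun u v hu =>
    norm_setIntegral_le_of_norm_le_const
      (measure_lt_top_of_subset Set.sdiff_subset hu) fun x _ => hC x
  rw [← integral_inter_add_sdiff ht (hint s hsμ), ← integral_inter_add_sdiff hs (hint t htμ),
    Set.inter_comm t s, add_sub_add_left_eq_sub, measureReal_symmDiff_eq hs ht hsμ htμ, mul_add]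
  exact (norm_sub_le _ _).trans (add_le_add (hdiff s t hsμ) (hdiff t s htμ))

theorem integral_cond_eq_smul {E X : Type*} [NormedAddCommGroup E] [NormedSpace ℝ E]
    [MeasurableSpace X] (μ : Measure X) (s : Set X) (f : X → E) :
    ∫ x, f x ∂ProbabilityTheory.cond μ s = (μ s).toReal⁻¹ • ∫ x in s, f x ∂μ := by
  rw [ProbabilityTheory.cond, integral_smul_measure, ENNReal.toReal_inv]

theorem integral_cond_integral_cond_eq_smul {E : Type*} [NormedAddCommGroup E] [NormedSpace ℝ E]
    {X : Type*} [MeasurableSpace X] (μ : Measure X) (s t : Set X) (f : X → X → E) :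
    ∫ x, ∫ y, f x y ∂ProbabilityTheory.cond μ t ∂ProbabilityTheory.cond μ s =
      ((μ s).toReal * (μ t).toReal)⁻¹ • ∫ x in s, ∫ y in t, f x y ∂μ ∂μ := by
  simp only [integral_cond_eq_smul, integral_smul, smul_smul, mul_inv, mul_comm]

theorem IsFolnerNet.isReiterNet_cond [MeasurableMul G] {μ : Measure G} [μ.IsMulRightInvariant]
    {Λ : ι → Set G} (hΛ : IsFolnerNet μ l Λ) :
    IsReiterNet l fun α => ProbabilityTheory.cond μ (Λ α) where
  isProbabilityMeasure := by
    filter_upwards [hΛ.measure_pos_lt_top] with α hα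
    exact ProbabilityTheory.cond_isProbabilityMeasure_of_finite hα.1.ne' hα.2.ne
  translate k ε hε := by
    filter_upwards [hΛ.measurableSet, hΛ.measure_pos_lt_top,
      (hΛ.tendsto k).eventually_lt_const hε] with α hmeas hfin hratio f C hf hC
    have hpre : Λ α * {k} = (fun g => g * k⁻¹) ⁻¹' Λ α := by ext g; simp
    have htranslate : ∫ g in Λ α, f (g * k) ∂μ = ∫ g in Λ α * {k}, f g ∂μ := by
      rw [← (measurePreserving_mul_right μ k).setIntegral_preimage_emb
        (measurableEmbedding_mulRight k) f, hpre, Set.preimage_preimage]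
      simp
    have hdiff := norm_setIntegral_sub_setIntegral_le (μ := μ) (t := Λ α * {k}) hmeas
      (hpre ▸ measurable_mul_const k⁻¹ hmeas) hfin.2.ne
      (by rw [hpre, measure_preimage_mul_right]; exact hfin.2.ne) hf hC
    have hC0 : 0 ≤ C := (norm_nonneg _).trans (hC 1)
    rw [integral_cond_eq_smul, integral_cond_eq_smul, htranslate, ← smul_sub, norm_smul,
      norm_inv, Real.norm_of_nonneg ENNReal.toReal_nonneg, norm_sub_rev]
    calc (μ (Λ α)).toReal⁻¹ * ‖(∫ g in Λ α, f g ∂μ) - ∫ g in Λ α * {k}, f g ∂μ‖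
        ≤ (μ (Λ α)).toReal⁻¹ * (C * μ.real (symmDiff (Λ α) (Λ α * {k}))) := by gcongr
      _ = (μ (symmDiff (Λ α) (Λ α * {k}))).toReal / (μ (Λ α)).toReal * C := by
        rw [measureReal_def]; ring
      _ ≤ ε * C := by gcongr

theorem isMulRightInvariant_of_measure_mul_singleton [MeasurableMul G] {μ : Measure G}
    (h : ∀ (s : Set G) (g : G), MeasurableSet s → μ (s * {g}) = μ s) : μ.IsMulRightInvariant where
  map_mul_right_eq_self g := Measure.ext fun s hs => by
    rw [Measure.map_apply (measurable_mul_const g) hs, ← h s g⁻¹ hs]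
    congr 1
    ext x
    simp

end Averages

section MeanErgodic

variable {G : Type*} [Group G] [MeasurableSpace G] {ι : Type*} {l : Filter ι}
  {ν : ι → Measure G} {E : Type*} [NormedAddCommGroup E] [NormedSpace ℂ E]
  (V : G →* (E ≃ₗᵢ[ℂ] E))

theorem mem_closure_of_forall_dual {D : Submodule ℂ E} {x : E}
    (hx : ∀ φ : StrongDual ℂ E, (∀ y ∈ D, φ y = 0) → φ x = 0) : x ∈ closure (D : Set E) := by
  by_contra hmem
  have hcl : IsClosed (D.topologicalClosure : Set E) := D.isClosed_topologicalClosure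
  obtain ⟨f, hf⟩ := SeparatingDual.exists_ne_zero (R := ℂ)
    (x := D.topologicalClosure.mkQL x) (by simpa [← SetLike.mem_coe] using hmem)
  exact hf (hx (f ∘L D.topologicalClosure.mkQL) fun y hy => by
    simp [(Submodule.Quotient.mk_eq_zero _).2 (D.le_topologicalClosure hy)])

theorem norm_integral_orbit_le_mul_norm {μ : Measure G} [IsProbabilityMeasure μ]
    (ψ : StrongDual ℂ E) (x : E) : ‖∫ g, ψ (V g x) ∂μ‖ ≤ ‖ψ‖ * ‖x‖ := by
  simpa using norm_integral_le_of_norm_le_const (μ := μ) (f := fun g => ψ (V g x))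
    (.of_forall fun g => (ψ.le_opNorm _).trans_eq (by rw [(V g).norm_map]))

theorem integrable_orbit {μ : Measure G} [IsFiniteMeasure μ]
    {ψ : StrongDual ℂ E} {x : E} (hψ : Measurable fun g => ψ (V g x)) :
    Integrable (fun g => ψ (V g x)) μ :=
  .of_bound hψ.aestronglyMeasurable (‖ψ‖ * ‖x‖)
    (.of_forall fun g => (ψ.le_opNorm _).trans_eq (by rw [(V g).norm_map]))

variable {V}

theorem IsReiterNet.norm_integral_coboundary_le (hν : IsReiterNet l ν) {x : E}
    (hx : x ∈ Submodule.span ℂ {y | ∃ k z, V k z - z = y}) {ε : ℝ} (hε : 0 < ε) :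
    ∀ᶠ α in l, ∀ ψ : StrongDual ℂ E, (∀ z, Measurable fun g => ψ (V g z)) →
      ‖∫ g, ψ (V g x) ∂ν α‖ ≤ ε * ‖ψ‖ := by
  induction hx using Submodule.span_induction generalizing ε with
  | zero => exact .of_forall fun α ψ _ => by simpa using by positivity
  | mem x hx =>
    obtain ⟨k, z, rfl⟩ := hx
    filter_upwards [hν.isProbabilityMeasure, hν.translate k (ε / (‖z‖ + 1)) (by positivity)]
      with α hα htranslate ψ hψ
    have hbound := htranslate (fun g => ψ (V g z)) (‖ψ‖ * ‖z‖) (hψ z) fun g =>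
      (ψ.le_opNorm _).trans_eq (by rw [(V g).norm_map])
    have hsub : ∫ g, ψ (V g (V k z - z)) ∂ν α =
        ∫ g, ψ (V (g * k) z) ∂ν α - ∫ g, ψ (V g z) ∂ν α := by
      rw [← integral_sub _ (integrable_orbit V (hψ z))]
      · simp
      · simpa using integrable_orbit V (hψ (V k z)) (μ := ν α)
    rw [hsub]
    refine hbound.trans ?_
    calc ε / (‖z‖ + 1) * (‖ψ‖ * ‖z‖) = ε * ‖ψ‖ * (‖z‖ / (‖z‖ + 1)) := by ring
      _ ≤ ε * ‖ψ‖ := mul_le_of_le_one_right (by positivity)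
        ((div_le_one (by positivity)).2 (by simp))
  | add x y _ _ ihx ihy =>
    filter_upwards [hν.isProbabilityMeasure, ihx (half_pos hε), ihy (half_pos hε)]
      with α hα hxα hyα ψ hψ
    simp only [map_add]
    rw [integral_add (integrable_orbit V (hψ x)) (integrable_orbit V (hψ y))]
    linarith [norm_add_le (∫ g, ψ (V g x) ∂ν α) (∫ g, ψ (V g y) ∂ν α), hxα ψ hψ, hyα ψ hψ]
  | smul c x _ ih =>
    filter_upwards [ih (ε := ε / (‖c‖ + 1)) (by positivity)] with α hα ψ hψ
    simp only [map_smul, smul_eq_mul, integral_const_mul, norm_mul]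
    calc ‖c‖ * ‖∫ g, ψ (V g x) ∂ν α‖ ≤ ‖c‖ * (ε / (‖c‖ + 1) * ‖ψ‖) := by gcongr; exact hα ψ hψ
      _ = ε * ‖ψ‖ * (‖c‖ / (‖c‖ + 1)) := by ring
      _ ≤ ε * ‖ψ‖ := mul_le_of_le_one_right (by positivity)
        ((div_le_one (by positivity)).2 (by simp))

theorem IsReiterNet.norm_integral_orbit_le (hν : IsReiterNet l ν) {x : E}
    (hx : ∀ φ : StrongDual ℂ E, (∀ g z, φ (V g z) = φ z) → φ x = 0) {ε : ℝ} (hε : 0 < ε) :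
    ∀ᶠ α in l, ∀ ψ : StrongDual ℂ E, (∀ z, Measurable fun g => ψ (V g z)) →
      ‖∫ g, ψ (V g x) ∂ν α‖ ≤ ε * ‖ψ‖ := by
  obtain ⟨y, hy, hxy⟩ := Metric.mem_closure_iff.1
    (mem_closure_of_forall_dual
      (D := .span ℂ {y | ∃ k z, V k z - z = y}) fun φ hφ => hx φ fun g z => sub_eq_zero.1 <| by
      simpa using hφ _ (Submodule.subset_span ⟨g, z, rfl⟩)) (ε / 2) (half_pos hε)
  filter_upwards [hν.isProbabilityMeasure, hν.norm_integral_coboundary_le hy (half_pos hε)]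
    with α hα hyα ψ hψ
  have hsplit : ∫ g, ψ (V g x) ∂ν α = ∫ g, ψ (V g (x - y)) ∂ν α + ∫ g, ψ (V g y) ∂ν α := by
    rw [← integral_add (integrable_orbit V (hψ _)) (integrable_orbit V (hψ y))]
    simp
  calc ‖∫ g, ψ (V g x) ∂ν α‖ ≤ ‖ψ‖ * ‖x - y‖ + ε / 2 * ‖ψ‖ := by
        rw [hsplit]
        exact (norm_add_le _ _).trans
          (add_le_add (norm_integral_orbit_le_mul_norm V ψ _) (hyα ψ hψ))
    _ ≤ ‖ψ‖ * (ε / 2) + ε / 2 * ‖ψ‖ := by rw [dist_eq_norm] at hxy; gcongr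
    _ = ε * ‖ψ‖ := by ring

end MeanErgodic

section JointEigenvectors

variable {H : Type*} [NormedAddCommGroup H] [InnerProductSpace ℂ H]

theorem isFinitelySemisimple_linearIsometryEquiv (T : H ≃ₗᵢ[ℂ] H) :
    Module.End.IsFinitelySemisimple (T.toLinearEquiv : H →ₗ[ℂ] H) := by
  refine Module.End.isFinitelySemisimple_iff.2 fun p hp _ q hq hqp => ?_
  have : FiniteDimensional ℂ q := Submodule.finiteDimensional_of_le hqp
  have hTq : q.map (T.toLinearEquiv : H →ₗ[ℂ] H) = q :=
    Submodule.eq_of_le_of_finrank_eq (Submodule.map_le_iff_le_comap.2 hq)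
      (T.toLinearEquiv.finrank_map_eq q)
  have horth : qᗮ ∈ Module.End.invtSubmodule (T.toLinearEquiv : H →ₗ[ℂ] H) := fun x hx y hy => by
    obtain ⟨z, hz, rfl⟩ := hTq.ge hy
    exact (T.inner_map_map z x).trans (hx z hz)
  refine ⟨qᗮ ⊓ p, inf_le_right, Module.End.invtSubmodule.inf_mem horth hp, ?_, ?_⟩
  · simp [disjoint_iff, ← inf_assoc, Submodule.inf_orthogonal_eq_bot q]
  · rw [← sup_inf_assoc_of_le _ hqp, Submodule.sup_orthogonal_of_hasOrthogonalProjection,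
      top_inf_eq]

/-- The span of the joint eigenvectors of a family of unitary operators. -/
def jointEigenspan {ι : Type*} (U : ι → H ≃ₗᵢ[ℂ] H) : Submodule ℂ H :=
  ⨆ χ : ι → ℂ, ⨅ i, Module.End.eigenspace ((U i).toLinearEquiv : H →ₗ[ℂ] H) (χ i)

variable {ι : Type*} {U : ι → H ≃ₗᵢ[ℂ] H} (hU : ∀ i k x, U i (U k x) = U k (U i x))

include hU

theorem le_jointEigenspan_of_finiteDimensional {W : Submodule ℂ H} [FiniteDimensional ℂ W]
    (hW : ∀ i, W ∈ Module.End.invtSubmodule ((U i).toLinearEquiv : H →ₗ[ℂ] H)) :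
    W ≤ jointEigenspan U := by
  let T : ι → Module.End ℂ W := fun i => ((U i).toLinearEquiv : H →ₗ[ℂ] H).restrict (hW i)
  have hT : ∀ i, (T i).IsFinitelySemisimple := fun i =>
    (isFinitelySemisimple_linearIsometryEquiv (U i)).restrict (hW i)
  have htop : ⨆ χ : ι → ℂ, ⨅ i, (T i).eigenspace (χ i) = ⊤ := by
    simp_rw [← fun i => (hT i).maxGenEigenspace_eq_eigenspace]
    exact Module.End.iSup_iInf_maxGenEigenspace_eq_top_of_iSup_maxGenEigenspace_eq_top_of_commute T
      (fun i k _ => LinearMap.ext fun x => Subtype.ext (hU i k x))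
      fun i => Module.End.iSup_maxGenEigenspace_eq_top _
  rw [← W.map_subtype_top, ← htop, Submodule.map_iSup]
  refine iSup_mono fun χ => le_iInf fun i => ?_
  rintro _ ⟨x, hx, rfl⟩
  have hxi := Module.End.mem_eigenspace_iff.1 ((Submodule.mem_iInf _).1 hx i)
  exact Module.End.mem_eigenspace_iff.2 (congrArg Subtype.val hxi)

theorem apply_eq_zero_of_isSymmetric_of_mem_jointEigenspan_orthogonal [CompleteSpace H]
    {A : H →L[ℂ] H} (hA : IsCompactOperator A) (hA' : A.IsSymmetric)
    (hAU : ∀ i x, A (U i x) = U i (A x))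
    {x : H} (hx : x ∈ (jointEigenspan U)ᗮ) : A x = 0 := by
  rw [← Submodule.mem_bot ℂ,
    ← ContinuousLinearMap.orthogonalComplement_iSup_eigenspaces_eq_bot hA hA',
    ← Submodule.iInf_orthogonal, Submodule.mem_iInf]
  intro c y hy
  have hAy : A y = c • y := Module.End.mem_eigenspace_iff.1 hy
  rw [← ContinuousLinearMap.coe_coe, ← hA', ContinuousLinearMap.coe_coe, hAy, inner_smul_left]
  rcases eq_or_ne c 0 with rfl | hc
  · simp
  have : FiniteDimensional ℂ (Module.End.eigenspace (A : H →ₗ[ℂ] H) c) :=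
    ContinuousLinearMap.finite_dimensional_eigenspace hA c hc
  rw [hx y (le_jointEigenspan_of_finiteDimensional hU (fun i z hz => ?_) hy), mul_zero]
  have hAz : A z = c • z := Module.End.mem_eigenspace_iff.1 hz
  exact Module.End.mem_eigenspace_iff.2 <| show A (U i z) = c • U i z by
    rw [hAU, hAz, map_smul]

theorem apply_eq_zero_of_isCompactOperator_of_mem_jointEigenspan_orthogonal [CompleteSpace H]
    {S : H →L[ℂ] H} (hS : IsCompactOperator S) (hSU : ∀ i x, S (U i x) = U i (S x))
    {x : H} (hx : x ∈ (jointEigenspan U)ᗮ) : S x = 0 := by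
  have hadj : ∀ i x, S.adjoint (U i x) = U i (S.adjoint x) := fun i x => by
    refine ext_inner_left ℂ fun v => ?_
    obtain ⟨w, rfl⟩ := (U i).surjective v
    rw [ContinuousLinearMap.adjoint_inner_right, hSU, (U i).inner_map_map, (U i).inner_map_map,
      ContinuousLinearMap.adjoint_inner_right]
  have hSSx : (S.adjoint ∘L S) x = 0 :=
    apply_eq_zero_of_isSymmetric_of_mem_jointEigenspan_orthogonal hU
      (hS.clm_comp S.adjoint) (fun v w => by
        simp [ContinuousLinearMap.adjoint_inner_left, ContinuousLinearMap.adjoint_inner_right])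
      (fun i x => by simp [hSU, hadj]) hx
  simpa [hSSx] using ContinuousLinearMap.apply_norm_sq_eq_inner_adjoint_left S x

end JointEigenvectors

section DualHilbert

open InnerProductSpace

variable {H : Type*} [NormedAddCommGroup H] [InnerProductSpace ℂ H] [CompleteSpace H]

/-- The Hilbert space structure on the dual of a Hilbert space `H`, which realises the complex
conjugate of `H`; the underlying norm is the operator norm. -/
noncomputable instance strongDualInnerProductSpace : InnerProductSpace ℂ (StrongDual ℂ H) where
  inner φ ψ := inner ℂ ((toDual ℂ H).symm ψ) ((toDual ℂ H).symm φ)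
  norm_sq_eq_re_inner φ := by
    rw [← (toDual ℂ H).symm.norm_map φ, norm_sq_eq_re_inner (𝕜 := ℂ)]
  conj_inner_symm φ ψ := inner_conj_symm _ _
  add_left φ ψ χ := by rw [map_add, inner_add_right]
  smul_left φ ψ c := by rw [map_smulₛₗ, inner_smul_right]

theorem inner_toDual_toDual (v w : H) :
    inner ℂ (toDual ℂ H v) (toDual ℂ H w) = inner ℂ w v := by
  change inner ℂ ((toDual ℂ H).symm _) ((toDual ℂ H).symm _) = _
  simp only [LinearIsometryEquiv.symm_apply_apply]

theorem denseRange_toDualMap (E : Type*) [NormedAddCommGroup E] [InnerProductSpace ℂ E] :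
    DenseRange (toDualMap ℂ E) := by
  intro φ
  let ι : E →L[ℂ] UniformSpace.Completion E := UniformSpace.Completion.toComplL
  have hι : ∀ z : E, φ.extend ι z = φ z := φ.extend_eq (e := ι)
    UniformSpace.Completion.denseRange_coe
    (UniformSpace.Completion.isUniformInducing_coe E)
  refine Metric.mem_closure_range_iff.2 fun ε hε => ?_
  obtain ⟨ξ, hξ⟩ := UniformSpace.Completion.denseRange_coe.exists_dist_lt
    ((toDual ℂ _).symm (φ.extend ι)) hε
  refine ⟨ξ, lt_of_le_of_lt ?_ hξ⟩
  rw [dist_eq_norm, dist_eq_norm]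
  refine ContinuousLinearMap.opNorm_le_bound _ (norm_nonneg _) fun z => ?_
  calc ‖(φ - toDualMap ℂ E ξ) z‖
      = ‖inner ℂ ((toDual ℂ _).symm (φ.extend ι) - (ξ : UniformSpace.Completion E))
          (z : UniformSpace.Completion E)‖ := by
        rw [inner_sub_left, toDual_symm_apply, UniformSpace.Completion.inner_coe, hι]
        rfl
    _ ≤ _ := (norm_inner_le_norm _ _).trans_eq (by simp)

end DualHilbert

section UnitaryRepresentations

variable {G H : Type*} [NormedAddCommGroup H] [InnerProductSpace ℂ H]

theorem norm_inner_apply_le (U : H ≃ₗᵢ[ℂ] H) (v w : H) :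
    ‖(inner ℂ v (U w) : ℂ)‖ ≤ ‖v‖ * ‖w‖ :=
  (norm_inner_le_norm _ _).trans_eq (by rw [U.norm_map])

theorem inner_inv_apply_left {G : Type*} [Group G] (U : G →* (H ≃ₗᵢ[ℂ] H)) (g : G) (v w : H) :
    (inner ℂ (U g⁻¹ v) w : ℂ) = inner ℂ v (U g w) := by
  rw [map_inv]
  exact (U g)⁻¹.inner_map_eq_flip v w

theorem measurable_inner_of_denseRange [MeasurableSpace G] {X : Type*} {j : X → H}
    (hj : DenseRange j) {U : G → H ≃ₗᵢ[ℂ] H}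
    (hU : ∀ a b, Measurable fun g => (inner ℂ (j a) (U g (j b)) : ℂ)) (v w : H) :
    Measurable fun g => (inner ℂ v (U g w) : ℂ) := by
  have hleft : ∀ b, Measurable fun g => (inner ℂ v (U g (j b)) : ℂ) := fun b => by
    obtain ⟨u, hu, hlim⟩ := mem_closure_iff_seq_limit.1 (hj v)
    choose a ha using hu
    refine measurable_of_tendsto_metrizable (fun n => hU (a n) b) (tendsto_pi_nhds.2 fun g => ?_)
    simpa only [ha] using hlim.inner tendsto_const_nhds
  obtain ⟨u, hu, hlim⟩ := mem_closure_iff_seq_limit.1 (hj w)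
  choose b hb using hu
  refine measurable_of_tendsto_metrizable (fun n => hleft (b n)) (tendsto_pi_nhds.2 fun g => ?_)
  simpa only [Function.comp_apply, hb] using
    tendsto_const_nhds.inner (((U g).continuous.tendsto w).comp hlim)

theorem exists_unitaryRepresentation [Group G] {U : G → H →L[ℂ] H} (hone : U 1 = 1)
    (hmul : ∀ g k, U (g * k) = U g * U k) (hcontr : ∀ g, ‖U g‖ ≤ 1) :
    ∃ V : G →* (H ≃ₗᵢ[ℂ] H), ∀ g x, V g x = U g x := by
  have hinv (g : G) (x : H) : U g⁻¹ (U g x) = x := by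
    simpa [hone] using (DFunLike.congr_fun (hmul g⁻¹ g) x).symm
  have hle (g : G) (x : H) : ‖U g x‖ ≤ ‖x‖ := by simpa using (U g).le_of_opNorm_le (hcontr g) x
  let V (g : G) : H ≃ₗᵢ[ℂ] H :=
    { toLinearEquiv := .ofLinearMap (U g).toLinearMap (U g⁻¹).toLinearMap
        (LinearMap.ext fun x => by simpa using hinv g⁻¹ x) (LinearMap.ext (hinv g))
      norm_map' := fun x =>
        (hle g x).antisymm ((congrArg _ (hinv g x)).symm.trans_le (hle g⁻¹ (U g x))) }
  exact ⟨.mk' V fun g k => LinearIsometryEquiv.ext fun x => DFunLike.congr_fun (hmul g k) x,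
    fun _ _ => rfl⟩

theorem flightVectors_le_jointEigenspan_orthogonal {U : G → H →L[ℂ] H} {V : G → H ≃ₗᵢ[ℂ] H}
    (hVU : ∀ g x, V g x = U g x) : flightVectors U ≤ (jointEigenspan V)ᗮ := by
  refine Submodule.orthogonal_le (iSup_le fun χ x hx => ?_)
  rcases eq_or_ne x 0 with rfl | hx0
  · exact Submodule.zero_mem _
  have hχ (g : G) : V g x = χ g • x :=
    Module.End.mem_eigenspace_iff.1 ((Submodule.mem_iInf _).1 hx g)
  refine Submodule.le_topologicalClosure _
    (Submodule.subset_span ⟨hx0, χ, fun g => ⟨?_, (hVU g x).symm.trans (hχ g)⟩⟩)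
  have hnorm := (V g).norm_map x
  rw [hχ, norm_smul] at hnorm
  exact (mul_eq_right₀ (norm_ne_zero_iff.2 hx0)).1 hnorm

end UnitaryRepresentations

section ConjTensor

open InnerProductSpace TensorProduct

/-- The algebraic tensor product of a Hilbert space with its complex conjugate, the latter realised
as the dual space. -/
def ConjTensor (H : Type*) [NormedAddCommGroup H] [InnerProductSpace ℂ H] [CompleteSpace H] :
    Type _ :=
  H ⊗[ℂ] StrongDual ℂ H

namespace ConjTensor

variable {H : Type*} [NormedAddCommGroup H] [InnerProductSpace ℂ H] [CompleteSpace H]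

noncomputable instance : NormedAddCommGroup (ConjTensor H) :=
  inferInstanceAs (NormedAddCommGroup (H ⊗[ℂ] StrongDual ℂ H))

noncomputable instance : InnerProductSpace ℂ (ConjTensor H) :=
  inferInstanceAs (InnerProductSpace ℂ (H ⊗[ℂ] StrongDual ℂ H))

/-- The elementary tensor `tmul y x = x ⊗ ȳ`, with the conjugate-linear variable first. -/
noncomputable def tmul : H →L⋆[ℂ] H →L[ℂ] ConjTensor H :=
  (mkL ℂ H (StrongDual ℂ H)).flip.comp
    ((toDual ℂ H).toContinuousLinearEquiv : H →L⋆[ℂ] StrongDual ℂ H)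

theorem inner_tmul (x y v w : H) : inner ℂ (tmul y x) (tmul w v) = inner ℂ x v * inner ℂ w y :=
  (TensorProduct.inner_tmul ..).trans (congrArg (inner ℂ x v * ·) (inner_toDual_toDual y w))

theorem norm_tmul (x y : H) : ‖tmul y x‖ = ‖x‖ * ‖y‖ :=
  (TensorProduct.norm_tmul x (toDual ℂ H y)).trans (by rw [LinearIsometryEquiv.norm_map])

theorem induction_on {p : ConjTensor H → Prop} (z : ConjTensor H) (zero : p 0)
    (tmul : ∀ x y, p (tmul y x)) (add : ∀ z w, p z → p w → p (z + w)) : p z := by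
  refine TensorProduct.induction_on (motive := p) z zero (fun x f => ?_) add
  obtain ⟨y, rfl⟩ := (toDual ℂ H).surjective f
  exact tmul x y

/-- The unitary operator `x ⊗ ȳ ↦ U x ⊗ (U y)‾`. -/
noncomputable def map (U : H ≃ₗᵢ[ℂ] H) : ConjTensor H ≃ₗᵢ[ℂ] ConjTensor H :=
  congrIsometry U (((toDual ℂ H).symm.trans U).trans (toDual ℂ H))

theorem map_tmul (U : H ≃ₗᵢ[ℂ] H) (x y : H) : map U (tmul y x) = tmul (U y) (U x) := by
  change congrIsometry U _ (x ⊗ₜ toDual ℂ H y) = U x ⊗ₜ toDual ℂ H (U y)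
  simp

/-- The representation `U ⊗ Ū` attached to a unitary representation `U`. -/
noncomputable def representation {G : Type*} [Group G] (U : G →* (H ≃ₗᵢ[ℂ] H)) :
    G →* (ConjTensor H ≃ₗᵢ[ℂ] ConjTensor H) where
  toFun g := map (U g)
  map_one' := LinearIsometryEquiv.ext fun z => by
    induction z using induction_on with
    | zero => rw [map_zero, map_zero]
    | tmul x y => rw [map_tmul, map_one]; rfl
    | add z w hz hw => rw [map_add, map_add, hz, hw]
  map_mul' g k := LinearIsometryEquiv.ext fun z => by
    induction z using induction_on with
    | zero => rw [map_zero, map_zero]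
    | tmul x y =>
      rw [LinearIsometryEquiv.coe_mul, Function.comp_apply, map_tmul, map_tmul, map_tmul, map_mul]
      rfl
    | add z w hz hw => rw [map_add, map_add, hz, hw]

theorem representation_tmul {G : Type*} [Group G] (U : G →* (H ≃ₗᵢ[ℂ] H)) (g : G) (x y : H) :
    representation U g (tmul y x) = tmul (U g y) (U g x) :=
  map_tmul _ x y

theorem inner_tmul_self_representation_tmul_self {G : Type*} [Group G] (U : G →* (H ≃ₗᵢ[ℂ] H))
    (g : G) (v x : H) :
    inner ℂ (tmul v v) (representation U g (tmul x x)) =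
      ((‖(inner ℂ v (U g x) : ℂ)‖ ^ 2 : ℝ) : ℂ) := by
  rw [representation_tmul, inner_tmul, ← inner_conj_symm (U g x), RCLike.mul_conj]
  simp

theorem measurable_inner_representation {G : Type*} [Group G] [MeasurableSpace G]
    {U : G →* (H ≃ₗᵢ[ℂ] H)} (hU : ∀ v w, Measurable fun g => (inner ℂ v (U g w) : ℂ)) (v : H)
    (z : ConjTensor H) :
    Measurable fun g => (inner ℂ (tmul v v) (representation U g z) : ℂ) := by
  induction z using induction_on with
  | zero => simp
  | tmul x y =>
    simp_rw [representation_tmul, inner_tmul, ← inner_conj_symm (U _ y)]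
    exact (hU v x).mul (Complex.continuous_conj.measurable.comp (hU v y))
  | add z w hz hw =>
    simp only [map_add, inner_add_right]
    exact hz.add hw

/-- The operator `S` on `H` determined by `⟪S w, v⟫ = φ (v ⊗ w̄)`. -/
noncomputable def toOperator (φ : StrongDual ℂ (ConjTensor H)) : H →L[ℂ] H :=
  continuousLinearMapOfBilin ((ContinuousLinearMap.compL ℂ H (ConjTensor H) ℂ φ).comp tmul)

theorem inner_toOperator (φ : StrongDual ℂ (ConjTensor H)) (v w : H) :
    inner ℂ (toOperator φ w) v = φ (tmul w v) := by
  simp [toOperator]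

theorem continuous_toOperator : Continuous (toOperator (H := H)) := by
  refine (LipschitzWith.of_dist_le_mul (K := 1) fun φ ψ => ?_).continuous
  rw [NNReal.coe_one, one_mul, dist_eq_norm, dist_eq_norm]
  refine ContinuousLinearMap.opNorm_le_of_re_inner_le (norm_nonneg _) fun w v hw hv => ?_
  calc _ ≤ ‖(φ - ψ) (tmul w v)‖ := by
        rw [sub_apply, inner_sub_left, inner_toOperator, inner_toOperator]
        exact RCLike.re_le_norm ((φ - ψ) (tmul w v))
    _ ≤ ‖φ - ψ‖ * ‖tmul w v‖ := (φ - ψ).le_opNorm _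
    _ = ‖φ - ψ‖ := by rw [norm_tmul, hw, hv, mul_one, mul_one]

theorem isCompactOperator_toOperator (φ : StrongDual ℂ (ConjTensor H)) :
    IsCompactOperator (toOperator φ) := by
  refine (denseRange_toDualMap (ConjTensor H)).induction_on
    (p := fun φ => IsCompactOperator (toOperator φ)) φ
    (isClosed_setOfPred_isCompactOperator.preimage continuous_toOperator) fun ξ => ?_
  induction ξ using induction_on with
  | zero =>
    convert isCompactOperator_zero (M₁ := H) (M₂ := H) using 2
    ext w
    refine ext_inner_right ℂ fun v => ?_
    simp [inner_toOperator]
  | tmul x y =>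
    have hrank : toOperator (toDualMap ℂ _ (tmul y x)) = rankOne ℂ x y := by
      refine ContinuousLinearMap.ext fun w => ext_inner_right ℂ fun v => ?_
      rw [inner_toOperator, toDualMap_apply_apply, inner_tmul, rankOne_apply, inner_smul_left,
        inner_conj_symm, mul_comm]
    rw [hrank, rankOne_def']
    exact (isCompactOperator_of_locallyCompactSpace_dom (innerSL ℂ y)).clm_comp
      (ContinuousLinearMap.toSpanSingleton ℂ x)
  | add ξ η hξ hη =>
    have hadd : toOperator (toDualMap ℂ _ (ξ + η)) =
        toOperator (toDualMap ℂ _ ξ) + toOperator (toDualMap ℂ _ η) := by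
      refine ContinuousLinearMap.ext fun w => ext_inner_right ℂ fun v => ?_
      simp [inner_toOperator, inner_add_left]
    rw [hadd]
    exact hξ.add hη

theorem toOperator_commute {G : Type*} [Group G] {U : G →* (H ≃ₗᵢ[ℂ] H)}
    {φ : StrongDual ℂ (ConjTensor H)} (hφ : ∀ g z, φ (representation U g z) = φ z) (g : G) (w : H) :
    toOperator φ (U g w) = U g (toOperator φ w) := by
  refine ext_inner_right ℂ fun v => ?_
  obtain ⟨v, rfl⟩ := (U g).surjective v
  rw [inner_toOperator, (U g).inner_map_map, inner_toOperator, ← representation_tmul, hφ]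

end ConjTensor

end ConjTensor

section WeakMixing

variable {G : Type*} [CommGroup G] [MeasurableSpace G] {ι : Type*} {l : Filter ι}
  {ν : ι → Measure G} {H : Type*} [NormedAddCommGroup H] [InnerProductSpace ℂ H] [CompleteSpace H]
  {U : G →* (H ≃ₗᵢ[ℂ] H)}

theorem IsReiterNet.integral_norm_inner_sq_le (hν : IsReiterNet l ν)
    (hU : ∀ v w, Measurable fun g => (inner ℂ v (U g w) : ℂ)) {x : H}
    (hx : x ∈ (jointEigenspan U)ᗮ) {ε : ℝ} (hε : 0 < ε) :
    ∀ᶠ α in l, ∀ v, ∫ g, ‖(inner ℂ v (U g x) : ℂ)‖ ^ 2 ∂ν α ≤ ε * ‖v‖ ^ 2 := by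
  have hvanish : ∀ φ : StrongDual ℂ (ConjTensor H),
      (∀ g z, φ (ConjTensor.representation U g z) = φ z) → φ (.tmul x x) = 0 := fun φ hφ => by
    have hcomm (g k : G) (y : H) : U g (U k y) = U k (U g y) :=
      show (U g * U k) y = (U k * U g) y by rw [← map_mul, mul_comm, map_mul]
    rw [← ConjTensor.inner_toOperator,
      apply_eq_zero_of_isCompactOperator_of_mem_jointEigenspan_orthogonal hcomm
        (ConjTensor.isCompactOperator_toOperator φ) (ConjTensor.toOperator_commute hφ) hx,
      inner_zero_left]
  filter_upwards [hν.norm_integral_orbit_le hvanish hε] with α hα v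
  have hint := hα (InnerProductSpace.toDualMap ℂ _ (.tmul v v))
    (ConjTensor.measurable_inner_representation hU v)
  simp only [InnerProductSpace.toDualMap_apply_apply,
    ConjTensor.inner_tmul_self_representation_tmul_self] at hint
  rw [integral_complex_ofReal, Complex.norm_real, LinearIsometry.norm_map, ConjTensor.norm_tmul,
    ← sq] at hint
  exact (le_abs_self _).trans hint

theorem IsReiterNet.integral_norm_inner_le (hν : IsReiterNet l ν)
    (hU : ∀ v w, Measurable fun g => (inner ℂ v (U g w) : ℂ)) {x : H}
    (hx : x ∈ (jointEigenspan U)ᗮ) {ε : ℝ} (hε : 0 < ε) :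
    ∀ᶠ α in l, ∀ v, ∫ g, ‖(inner ℂ v (U g x) : ℂ)‖ ∂ν α ≤ ε * ‖v‖ := by
  filter_upwards [hν.isProbabilityMeasure, hν.integral_norm_inner_sq_le hU hx (pow_pos hε 2)]
    with α hα hsq v
  have hbound (g : G) := norm_inner_apply_le (U g) v x
  have hmeas : Measurable fun g => ‖(inner ℂ v (U g x) : ℂ)‖ := (hU v x).norm
  have hint : Integrable (fun g => ‖(inner ℂ v (U g x) : ℂ)‖) (ν α) :=
    .of_bound hmeas.aestronglyMeasurable (‖v‖ * ‖x‖) (.of_forall fun g => by simpa using hbound g)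
  have hint_sq : Integrable (fun g => ‖(inner ℂ v (U g x) : ℂ)‖ ^ 2) (ν α) :=
    .of_bound (hmeas.pow_const 2).aestronglyMeasurable ((‖v‖ * ‖x‖) ^ 2)
      (.of_forall fun g => by
        rw [Real.norm_of_nonneg (by positivity)]; gcongr; exact hbound g)
  have hjensen : (∫ g, ‖(inner ℂ v (U g x) : ℂ)‖ ∂ν α) ^ 2 ≤
      ∫ g, ‖(inner ℂ v (U g x) : ℂ)‖ ^ 2 ∂ν α :=
    (even_two.convexOn_pow (𝕜 := ℝ)).map_integral_le (continuous_pow 2).continuousOn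
      isClosed_univ (.of_forall fun _ => trivial) hint hint_sq
  refine le_of_sq_le_sq ?_ (by positivity)
  rw [mul_pow]
  exact hjensen.trans (hsq v)

end WeakMixing

section TripleCorrelation

variable {G : Type*} [CommGroup G] [MeasurableSpace G] {ι : Type*} {l : Filter ι}
  {ν ν₁ ν₂ : ι → Measure G} {H : Type*} [NormedAddCommGroup H] [InnerProductSpace ℂ H]
  {U : G →* (H ≃ₗᵢ[ℂ] H)}

theorem integral_le_mul_of_le_mul_norm_inner {μ : Measure G} [IsFiniteMeasure μ]
    (hU : ∀ v w, Measurable fun g => (inner ℂ v (U g w) : ℂ)) {f : G → ℝ} (hf : ∀ g, 0 ≤ f g)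
    {v w : H} {M : ℝ} (hfM : ∀ g, f g ≤ M * ‖(inner ℂ v (U g w) : ℂ)‖) :
    ∫ g, f g ∂μ ≤ M * ∫ g, ‖(inner ℂ v (U g w) : ℂ)‖ ∂μ := by
  have hint : Integrable (fun g => (inner ℂ v (U g w) : ℂ)) μ :=
    .of_bound (hU v w).aestronglyMeasurable _ (.of_forall fun g => norm_inner_apply_le (U g) v w)
  rw [← integral_const_mul]
  exact integral_mono_of_nonneg (.of_forall hf) (hint.norm.const_mul M) (.of_forall hfM)

variable [CompleteSpace H]

theorem IsReiterNet.tendsto_integral_of_le_mul_norm_inner (hν : IsReiterNet l ν)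
    (hU : ∀ v w, Measurable fun g => (inner ℂ v (U g w) : ℂ)) {F : ι → G → ℝ}
    (hF : ∀ α g, 0 ≤ F α g) {v w : H} (hw : w ∈ (jointEigenspan U)ᗮ) {M : ℝ} (hM : 0 ≤ M)
    (hFM : ∀ᶠ α in l, ∀ g, F α g ≤ M * ‖(inner ℂ v (U g w) : ℂ)‖) :
    Tendsto (fun α => ∫ g, F α g ∂ν α) l (𝓝 0) := by
  refine tendsto_order.2 ⟨fun e he => .of_forall fun α => he.trans_le (integral_nonneg (hF α)),
    fun e he => ?_⟩
  obtain ⟨δ, hδ, hδe⟩ := exists_pos_mul_lt he (M * ‖v‖)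
  filter_upwards [hν.isProbabilityMeasure, hν.integral_norm_inner_le hU hw hδ, hFM]
    with α hα hle hα'
  calc ∫ g, F α g ∂ν α ≤ M * (δ * ‖v‖) :=
        (integral_le_mul_of_le_mul_norm_inner hU (hF α) hα').trans (by gcongr; exact hle v)
    _ = M * ‖v‖ * δ := by ring
    _ < e := hδe

theorem IsReiterNet.tendsto_integral_integral_of_le_mul_norm_inner
    (hν₁ : ∀ᶠ α in l, IsProbabilityMeasure (ν₁ α)) (hν₂ : IsReiterNet l ν₂)
    (hU : ∀ v w, Measurable fun g => (inner ℂ v (U g w) : ℂ)) {f : G → G → ℝ}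
    (hf : ∀ h g, 0 ≤ f h g) {v : G → H} {w : H} (hw : w ∈ (jointEigenspan U)ᗮ) {C M : ℝ}
    (hM : 0 ≤ M) (hv : ∀ h, ‖v h‖ ≤ C) (hfM : ∀ h g, f h g ≤ M * ‖(inner ℂ (v h) (U g w) : ℂ)‖) :
    Tendsto (fun α => ∫ h, ∫ g, f h g ∂ν₂ α ∂ν₁ α) l (𝓝 0) := by
  have hinner (α : ι) (h : G) : 0 ≤ ∫ g, f h g ∂ν₂ α := integral_nonneg (hf h)
  refine tendsto_order.2 ⟨fun e he => .of_forall fun α => he.trans_le (integral_nonneg (hinner α)),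
    fun e he => ?_⟩
  obtain ⟨δ, hδ, hδe⟩ := exists_pos_mul_lt he (M * C)
  filter_upwards [hν₁, hν₂.isProbabilityMeasure, hν₂.integral_norm_inner_le hU hw hδ]
    with α hα₁ hα₂ hle
  have hbound (h : G) : ∫ g, f h g ∂ν₂ α ≤ M * (δ * C) :=
    (integral_le_mul_of_le_mul_norm_inner hU (hf h) (hfM h)).trans <| by
      gcongr
      exact (hle (v h)).trans (by gcongr; exact hv h)
  calc ∫ h, ∫ g, f h g ∂ν₂ α ∂ν₁ α ≤ ∫ _, M * (δ * C) ∂ν₁ α :=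
        integral_mono_of_nonneg (.of_forall (hinner α)) (integrable_const _) (.of_forall hbound)
    _ = M * C * δ := by rw [integral_const, probReal_univ, one_smul]; ring
    _ < e := hδe

theorem IsReiterNet.tendsto_integral_integral_norm_inner_mul (hν₁ : IsReiterNet l ν₁)
    (hν₂ : IsReiterNet l ν₂) (hU : ∀ v w, Measurable fun g => (inner ℂ v (U g w) : ℂ)) {x y z : H}
    (hxyz : x ∈ (jointEigenspan U)ᗮ ∨ y ∈ (jointEigenspan U)ᗮ ∨ z ∈ (jointEigenspan U)ᗮ) :
    Tendsto (fun α => ∫ h, ∫ g, ‖(inner ℂ x (U (g * h) x) : ℂ)‖ * ‖(inner ℂ y (U g y) : ℂ)‖ *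
      ‖(inner ℂ z (U h z) : ℂ)‖ ∂ν₂ α ∂ν₁ α) l (𝓝 0) := by
  have hx (g : G) := norm_inner_apply_le (U g) x x
  have hy (g : G) := norm_inner_apply_le (U g) y y
  have hz (g : G) := norm_inner_apply_le (U g) z z
  rcases hxyz with hxv | hyv | hzv
  · have hshift (g h : G) : (inner ℂ x (U (g * h) x) : ℂ) = inner ℂ (U h⁻¹ x) (U g x) := by
      rw [inner_inv_apply_left, mul_comm, map_mul]
      rfl
    refine tendsto_integral_integral_of_le_mul_norm_inner hν₁.isProbabilityMeasure hν₂ hU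
      (M := ‖y‖ * ‖y‖ * (‖z‖ * ‖z‖)) (v := fun h => U h⁻¹ x) (fun _ _ => by positivity) hxv
      (by positivity) (fun h => ((U h⁻¹).norm_map x).le) fun h g => ?_
    rw [hshift, mul_assoc, mul_comm]
    gcongr
    exacts [hy g, hz h]
  · refine tendsto_integral_integral_of_le_mul_norm_inner hν₁.isProbabilityMeasure hν₂ hU
      (M := ‖x‖ * ‖x‖ * (‖z‖ * ‖z‖)) (v := fun _ => y) (fun _ _ => by positivity) hyv
      (by positivity) (fun _ => le_rfl) fun h g => ?_
    rw [mul_right_comm]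
    gcongr
    exacts [hx (g * h), hz h]
  · refine hν₁.tendsto_integral_of_le_mul_norm_inner hU (v := z)
      (fun α h => integral_nonneg fun g => by positivity) hzv
      (M := ‖x‖ * ‖x‖ * (‖y‖ * ‖y‖)) (by positivity) ?_
    filter_upwards [hν₂.isProbabilityMeasure] with α hα h
    rw [integral_mul_const]
    gcongr
    simpa using integral_mono_of_nonneg (μ := ν₂ α) (.of_forall fun g => by positivity)
      (integrable_const _) (.of_forall fun g => mul_le_mul (hx (g * h)) (hy g) (norm_nonneg _)
        (by positivity))

end TripleCorrelation

section GNS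

variable {A : Type*} [CStarAlgebra A] {G : Type*} [Group G] [MeasurableSpace G]
  {H : Type*} [NormedAddCommGroup H] [InnerProductSpace ℂ H]

/-- A C*-dynamical system with state `ω` and action `τ`, together with a GNS representation
`j : A → H` and the unitary representation `U` of the group that implements `τ` on `H`.
Positivity and `τ`-invariance of `ω` are encoded by `inner_apply` and by the unitarity of `U`. -/
structure IsGNSSystem (ω : A →ₗ[ℂ] ℂ) (τ : G →* (A ≃⋆ₐ[ℂ] A)) (j : A →ₗ[ℂ] H)
    (U : G →* (H ≃ₗᵢ[ℂ] H)) : Prop where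
  state_one : ω 1 = 1
  measurable_state : ∀ a b, Measurable fun g => ω (a * τ g b)
  denseRange : DenseRange j
  inner_apply : ∀ a b, inner ℂ (j a) (j b) = ω (star a * b)
  apply_apply : ∀ g a, U g (j a) = j (τ g a)

variable {ω : A →ₗ[ℂ] ℂ} {τ : G →* (A ≃⋆ₐ[ℂ] A)} {j : A →ₗ[ℂ] H}

theorem exists_isGNSSystem (hone : ω 1 = 1) (hτ : ∀ a b, Measurable fun g => ω (a * τ g b))
    (hj : DenseRange j) (hinner : ∀ a b, (inner ℂ (j a) (j b) : ℂ) = ω (star a * b))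
    {U : G → H →L[ℂ] H} (hU : ∀ g a, U g (j a) = j (τ g a)) (hcontr : ∀ g, ‖U g‖ ≤ 1) :
    ∃ V : G →* (H ≃ₗᵢ[ℂ] H), (∀ g x, V g x = U g x) ∧ IsGNSSystem ω τ j V := by
  have hext {S T : H →L[ℂ] H} (h : ∀ a, S (j a) = T (j a)) : S = T :=
    DFunLike.coe_injective (hj.equalizer S.continuous T.continuous (funext h))
  obtain ⟨V, hV⟩ := exists_unitaryRepresentation (U := U) (hext fun a => by simp [hU])
    (fun g k => hext fun a => by simp [hU]) hcontr
  exact ⟨V, hV, hone, hτ, hj, hinner, fun g a => (hV g (j a)).trans (hU g a)⟩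

namespace IsGNSSystem

variable {U : G →* (H ≃ₗᵢ[ℂ] H)} (S : IsGNSSystem ω τ j U)

include S

theorem state_mul (a b : A) : ω (a * b) = inner ℂ (j (star a)) (j b) := by
  rw [S.inner_apply, star_star]

theorem state_eq_inner (a : A) : ω a = inner ℂ (j 1) (j a) := by
  rw [S.inner_apply, star_one, one_mul]

theorem apply_one (g : G) : U g (j 1) = j 1 := by
  rw [S.apply_apply, _root_.map_one]

theorem state_apply (g : G) (a : A) : ω (τ g a) = ω a := by
  rw [S.state_eq_inner, S.state_eq_inner, ← S.apply_apply, ← S.apply_one g, (U g).inner_map_map,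
    S.apply_one]

theorem norm_apply_le (a : A) : ‖j a‖ ≤ ‖a‖ := by
  let := CStarAlgebra.spectralOrder A
  have := CStarAlgebra.spectralOrderedRing A
  obtain ⟨b, hb⟩ := CStarAlgebra.nonneg_iff_eq_star_mul_self.1
    (sub_nonneg.2 (CStarAlgebra.star_mul_le_algebraMap_norm_sq (a := a)))
  have hsum : ‖a‖ ^ 2 - ‖j a‖ ^ 2 = ‖j b‖ ^ 2 := by
    have hω := congrArg ω hb
    rw [map_sub, ← S.inner_apply, ← S.inner_apply, Algebra.algebraMap_eq_smul_one,
      ← Complex.coe_smul, map_smul, S.state_one, inner_self_eq_norm_sq_to_K,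
      inner_self_eq_norm_sq_to_K] at hω
    simpa [← Complex.ofReal_pow, ← Complex.ofReal_sub] using congrArg Complex.re hω
  exact le_of_sq_le_sq (sub_nonneg.1 (hsum ▸ sq_nonneg _)) (norm_nonneg a)

theorem norm_state_le (a : A) : ‖ω a‖ ≤ ‖a‖ := by
  have hone : ‖j 1‖ ≤ 1 := by
    have : Nontrivial A := ⟨1, 0, fun h => by simpa [h] using S.state_one⟩
    simpa using S.norm_apply_le 1
  rw [S.state_eq_inner]
  exact (norm_inner_le_norm _ _).trans <|
    (mul_le_of_le_one_left (norm_nonneg _) hone).trans (S.norm_apply_le a)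

theorem measurable_inner (v w : H) : Measurable fun g => (inner ℂ v (U g w) : ℂ) :=
  measurable_inner_of_denseRange S.denseRange
    (fun a b => by simpa only [S.apply_apply, S.inner_apply] using S.measurable_state (star a) b)
    v w

theorem norm_state_star_mul (a : A) (g : G) :
    ‖ω (star a * τ g a)‖ = ‖(inner ℂ (j a) (U g (j a)) : ℂ)‖ := by
  rw [S.apply_apply, S.inner_apply]

theorem norm_state_mul_star (a : A) (g : G) :
    ‖ω (τ g a * star a)‖ = ‖(inner ℂ (j (star a)) (U g (j (star a))) : ℂ)‖ := by
  rw [S.state_mul, ← map_star, ← S.apply_apply, norm_inner_symm]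

end IsGNSSystem

end GNS

section Correlations

theorem tendsto_integral_of_tendstoUniformly {ι X E : Type*} [MeasurableSpace X]
    [NormedAddCommGroup E] [NormedSpace ℝ E] {l : Filter ι} {μ : ι → Measure X}
    (hμ : ∀ᶠ α in l, IsProbabilityMeasure (μ α)) {F : ι → X → E} {f : X → E}
    (hF : ∀ᶠ α in l, Integrable (F α) (μ α)) (hf : ∀ᶠ α in l, Integrable f (μ α))
    (hFf : TendstoUniformly F f l) {e : E}
    (h : Tendsto (fun α => ∫ x, f x ∂μ α) l (𝓝 e)) :
    Tendsto (fun α => ∫ x, F α x ∂μ α) l (𝓝 e) := by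
  refine (tendsto_iff_of_dist (Metric.tendsto_nhds.2 fun ε hε => ?_)).1 h
  filter_upwards [hμ, hF, hf, Metric.tendstoUniformly_iff.1 hFf (ε / 2) (half_pos hε)]
    with α hα hFα hfα hdist
  have hle := norm_integral_le_of_norm_le_const (μ := μ α) (f := fun x => f x - F α x)
    (.of_forall fun x => (dist_eq_norm _ _).symm.trans_le (hdist x).le)
  rw [integral_sub hfα hFα, probReal_univ, mul_one] at hle
  rw [Real.dist_0_eq_abs, abs_of_nonneg dist_nonneg, dist_eq_norm]
  exact hle.trans_lt (half_lt_self hε)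

variable {A : Type*} [CStarAlgebra A] {G : Type*} [CommGroup G] [MeasurableSpace G]
  {H : Type*} [NormedAddCommGroup H] [InnerProductSpace ℂ H]
  {ω : A →ₗ[ℂ] ℂ} {τ : G →* (A ≃⋆ₐ[ℂ] A)} {j : A →ₗ[ℂ] H} {U : G →* (H ≃ₗᵢ[ℂ] H)}
  {ι : Type*} {l : Filter ι} {ν ν₁ ν₂ : ι → Measure G}

namespace IsGNSSystem

theorem eq_inner_smul_of_fixed [l.NeBot] (S : IsGNSSystem ω τ j U)
    (hν : ∀ᶠ α in l, IsProbabilityMeasure (ν α))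
    (herg : ∀ a b, Tendsto (fun α => ∫ g, ω (a * τ g b) ∂ν α) l (𝓝 (ω a * ω b)))
    {y : H} (hy : ∀ g, U g y = y) : y = (inner ℂ (j 1) y : ℂ) • j 1 := by
  have happrox (a b : A) :
      ‖(inner ℂ (j a) y : ℂ) - inner ℂ (j a) (j 1) * inner ℂ (j 1) (j b)‖ ≤
        ‖j a‖ * ‖y - j b‖ := by
    have hlim := (tendsto_const_nhds (x := (inner ℂ (j a) y : ℂ))).sub (herg (star a) b)
    simp only [← S.inner_apply, ← S.apply_apply] at hlim
    rw [show ω (star a) = inner ℂ (j a) (j 1) by rw [S.inner_apply, mul_one], S.state_eq_inner]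
      at hlim
    refine le_of_tendsto hlim.norm ?_
    filter_upwards [hν] with α hα
    have hint : Integrable (fun g => (inner ℂ (j a) (U g (j b)) : ℂ)) (ν α) :=
      .of_bound (S.measurable_inner _ _).aestronglyMeasurable _
        (.of_forall fun g => norm_inner_apply_le (U g) _ _)
    have hdiff : (inner ℂ (j a) y : ℂ) - ∫ g, inner ℂ (j a) (U g (j b)) ∂ν α =
        ∫ g, inner ℂ (j a) (U g (y - j b)) ∂ν α := by
      simp [map_sub, hy, integral_sub (integrable_const _) hint]
    rw [hdiff]
    simpa using norm_integral_le_of_norm_le_const (μ := ν α)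
      (.of_forall fun g => norm_inner_apply_le (U g) (j a) (y - j b))
  have hself (a : A) : (inner ℂ (j a) y : ℂ) = inner ℂ (j a) (j 1) * inner ℂ (j 1) y := by
    have hle := S.denseRange.induction_on (p := fun w =>
      ‖(inner ℂ (j a) y : ℂ) - inner ℂ (j a) (j 1) * inner ℂ (j 1) w‖ ≤ ‖j a‖ * ‖y - w‖) y
      (isClosed_le (by fun_prop) (by fun_prop)) (happrox a)
    simpa [sub_eq_zero] using hle
  refine ext_inner_left ℂ fun v => ?_
  induction v using S.denseRange.induction_on with
  | hp => exact isClosed_eq (by fun_prop) (by fun_prop)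
  | ih a => rw [hself, inner_smul_right, mul_comm]

theorem eq_inner_smul_of_ergodicAlong (S : IsGNSSystem ω τ j U) {μ : Measure G}
    (F : FolnerNetIn μ (Set.univ : Set G)) (hF : F.ErgodicAlong ω τ) {y : H} (hy : ∀ g, U g y = y) :
    y = (inner ℂ (j 1) y : ℂ) • j 1 := by
  refine S.eq_inner_smul_of_fixed (l := atTop)
    (ν := fun α => ProbabilityTheory.cond μ (F.Lam α)) ?_ (fun a b => ?_) hy
  · filter_upwards [F.fin] with α hα
    exact ProbabilityTheory.cond_isProbabilityMeasure_of_finite hα.1.ne' hα.2.ne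
  · simpa only [integral_cond_eq_smul] using hF a b

theorem inner_triple_eq (S : IsGNSSystem ω τ j U) (a b c : A) (g g' h h' : G) :
    (inner ℂ (j (τ (g * h) a * τ g b * τ h c))
      (j (τ (g * g' * (h * h')) a * τ (g * g') b * τ (h * h') c)) : ℂ) =
    ω (τ h (star c) * τ g (star b) * τ (g * h) (star a * τ (g' * h') a) * τ g (τ g' b) *
      τ h (τ h' c)) := by
  rw [S.inner_apply, mul_mul_mul_comm g g' h h']
  simp only [star_mul, map_star, _root_.map_mul, StarAlgEquiv.mul_apply, mul_assoc]

theorem state_correlation_eq (S : IsGNSSystem ω τ j U) (htr : ∀ a b, ω (a * b) = ω (b * a))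
    (g h : G) (c₁ b₁ a b₂ c₂ : A) :
    ω (τ h c₁ * τ g b₁ * τ (g * h) a * τ g b₂ * τ h c₂) =
      ω (τ g (τ h⁻¹ (b₁ * τ h a * b₂)) * (c₂ * c₁)) := by
  have hcomm (x : A) : τ h (τ g (τ h⁻¹ x)) = τ g x := by
    simp only [← StarAlgEquiv.mul_apply, ← _root_.map_mul, mul_comm g, mul_inv_cancel_left]
  rw [← S.state_apply h (τ g _ * _), _root_.map_mul (τ h), hcomm, htr _ (τ h c₂),
    htr (τ g _), _root_.map_mul (τ h)]
  simp only [_root_.map_mul, StarAlgEquiv.mul_apply, mul_assoc]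

theorem state_conj_eq (S : IsGNSSystem ω τ j U) (htr : ∀ a b, ω (a * b) = ω (b * a))
    (h : G) (b₁ a b₂ : A) :
    ω (τ h⁻¹ (b₁ * τ h a * b₂)) = ω (τ h a * (b₂ * b₁)) := by
  rw [S.state_apply, mul_assoc, htr, mul_assoc]

variable [CompleteSpace H]

theorem norm_integral_state_sub_le (S : IsGNSSystem ω τ j U) (hν : IsReiterNet l ν)
    (hfix : ∀ y, (∀ g, U g y = y) → y = (inner ℂ (j 1) y : ℂ) • j 1) (c : A) {ε : ℝ}
    (hε : 0 < ε) :
    ∀ᶠ α in l, ∀ a, ‖∫ g, ω (τ g a * c) ∂ν α - ω a * ω c‖ ≤ ε * ‖a‖ := by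
  let V : G →* (H ≃ₗᵢ[ℂ] H) := U.comp invMonoidHom
  have hV (g : G) (v w : H) : (inner ℂ v (V g w) : ℂ) = inner ℂ (U g v) w := by
    change inner ℂ v (U g⁻¹ w) = _
    rw [← inner_inv_apply_left, inv_inv]
  have hstate (g : G) (a : A) : ω (τ g a * c) = inner ℂ (j (star a)) (V g (j c)) := by
    rw [hV, S.apply_apply, map_star, ← S.state_mul]
  have hmeas (v w : H) : Measurable fun g => (inner ℂ v (V g w) : ℂ) := by
    simpa only [hV, Function.comp_def, inner_conj_symm] using
      Complex.continuous_conj.measurable.comp (S.measurable_inner w v)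
  have hinv (φ : StrongDual ℂ H) (hφ : ∀ g z, φ (V g z) = φ z) : φ (j c - ω c • j 1) = 0 := by
    obtain ⟨y, rfl⟩ := (InnerProductSpace.toDual ℂ H).surjective φ
    simp only [InnerProductSpace.toDual_apply_apply, hV] at hφ ⊢
    rw [hfix y fun g => ext_inner_right ℂ (hφ g), inner_smul_left, inner_sub_right,
      inner_smul_right, ← S.state_eq_inner, ← S.state_eq_inner, S.state_one, mul_one, sub_self,
      mul_zero]
  filter_upwards [hν.isProbabilityMeasure, hν.norm_integral_orbit_le hinv hε] with α hα hle a
  have hsplit : ∫ g, ω (τ g a * c) ∂ν α - ω a * ω c =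
      ∫ g, inner ℂ (j (star a)) (V g (j c - ω c • j 1)) ∂ν α := by
    have hint := integrable_orbit V (μ := ν α) (ψ := InnerProductSpace.toDualMap ℂ H (j (star a)))
      (hmeas (j (star a)) (j c))
    simp only [InnerProductSpace.toDualMap_apply_apply] at hint
    have hone (g : G) : V g (j 1) = j 1 := S.apply_one g⁻¹
    simp_rw [hstate, map_sub, map_smul, hone, inner_sub_right, inner_smul_right, ← S.state_mul,
      mul_one]
    rw [integral_sub hint (integrable_const _)]
    simp [mul_comm]
  rw [hsplit]
  refine (hle (InnerProductSpace.toDualMap ℂ H (j (star a))) (hmeas _)).trans ?_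
  rw [LinearIsometry.norm_map]
  gcongr
  exact (S.norm_apply_le _).trans_eq (norm_star a)

theorem tendstoUniformly_integral_state (S : IsGNSSystem ω τ j U) (hν : IsReiterNet l ν)
    (hfix : ∀ y, (∀ g, U g y = y) → y = (inner ℂ (j 1) y : ℂ) • j 1) (c : A) {X : Type*}
    {z : X → A} {C : ℝ} (hz : ∀ x, ‖z x‖ ≤ C) :
    TendstoUniformly (fun α x => ∫ g, ω (τ g (z x) * c) ∂ν α) (fun x => ω (z x) * ω c) l := by
  refine Metric.tendstoUniformly_iff.2 fun ε hε => ?_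
  obtain ⟨δ, hδ, hδε⟩ := exists_pos_mul_lt hε C
  filter_upwards [S.norm_integral_state_sub_le hν hfix c hδ] with α hα x
  rw [dist_comm, dist_eq_norm]
  refine ((hα (z x)).trans ?_).trans_lt hδε
  rw [mul_comm]
  gcongr
  exact hz x

theorem tendsto_integral_integral_state_correlation (S : IsGNSSystem ω τ j U)
    (htr : ∀ a b, ω (a * b) = ω (b * a))
    (hfix : ∀ y, (∀ g, U g y = y) → y = (inner ℂ (j 1) y : ℂ) • j 1) (hν₁ : IsReiterNet l ν₁)
    (hν₂ : IsReiterNet l ν₂) (c₁ b₁ a b₂ c₂ : A)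
    (hmeas : Measurable fun q : G × G =>
      ω (τ q.2 c₁ * τ q.1 b₁ * τ (q.1 * q.2) a * τ q.1 b₂ * τ q.2 c₂)) :
    Tendsto (fun α => ∫ h, ∫ g, ω (τ h c₁ * τ g b₁ * τ (g * h) a * τ g b₂ * τ h c₂) ∂ν₂ α ∂ν₁ α)
      l (𝓝 (ω a * ω (b₂ * b₁) * ω (c₂ * c₁))) := by
  simp only [S.state_correlation_eq htr] at hmeas ⊢
  let z (h : G) : A := τ h⁻¹ (b₁ * τ h a * b₂)
  have hz (h : G) : ‖z h‖ ≤ ‖b₁‖ * ‖a‖ * ‖b₂‖ := by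
    rw [StarAlgEquiv.norm_map]
    refine (norm_mul_le _ _).trans (mul_le_mul_of_nonneg_right ?_ (norm_nonneg _))
    exact (norm_mul_le _ _).trans_eq (by rw [StarAlgEquiv.norm_map])
  have hzω (h : G) : ω (z h) = ω (τ h a * (b₂ * b₁)) := S.state_conj_eq htr h b₁ a b₂
  refine tendsto_integral_of_tendstoUniformly hν₁.isProbabilityMeasure
    (f := fun h => ω (z h) * ω (c₂ * c₁)) ?_ ?_ ?_ ?_
  · filter_upwards [hν₁.isProbabilityMeasure, hν₂.isProbabilityMeasure] with α hα₁ hα₂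
    refine (Integrable.of_bound (μ := (ν₂ α).prod (ν₁ α)) hmeas.aestronglyMeasurable
      (‖b₁‖ * ‖a‖ * ‖b₂‖ * ‖c₂ * c₁‖) (.of_forall fun q => ?_)).integral_prod_right
    refine (S.norm_state_le _).trans ((norm_mul_le _ _).trans ?_)
    rw [StarAlgEquiv.norm_map]
    exact mul_le_mul_of_nonneg_right (hz q.2) (norm_nonneg _)
  · filter_upwards [hν₁.isProbabilityMeasure] with α hα
    simp only [hzω, htr (τ _ a)]
    refine .mul_const (.of_bound (S.measurable_state _ a).aestronglyMeasurable
      (‖b₂ * b₁‖ * ‖a‖) (.of_forall fun h => ?_)) _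
    refine (S.norm_state_le _).trans ((norm_mul_le _ _).trans_eq ?_)
    rw [StarAlgEquiv.norm_map]
  · exact S.tendstoUniformly_integral_state hν₂ hfix _ hz
  · simp only [hzω, integral_mul_const]
    exact ((S.tendstoUniformly_integral_state hν₁ hfix (b₂ * b₁) (z := fun _ : Unit => a)
      fun _ => le_rfl).tendsto_at ()).mul_const _

end IsGNSSystem

end Correlations

theorem lemma_5_3_1_general
    {A : Type*} [CStarAlgebra A] {ω : A →ₗ[ℂ] ℂ} (hω_one : ω 1 = 1)
    (hω_tracial : ∀ a b, ω (a * b) = ω (b * a))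
    {G : Type*} [CommGroup G] [MeasurableSpace G] [MeasurableMul₂ G]
    {μ : Measure G} [μ.IsMulRightInvariant] {τ : G →* (A ≃⋆ₐ[ℂ] A)}
    (hτ_meas : ∀ a b, Measurable fun g => ω (a * τ g b))
    (hErg : ∃ F : FolnerNetIn μ (Set.univ : Set G), F.ErgodicAlong ω τ)
    (hmeas5 : ∀ a₁ a₂ a₃ a₄ a₅ : A, Measurable fun q : G × G =>
      ω (τ q.2 a₁ * τ q.1 a₂ * τ (q.1 * q.2) a₃ * τ q.1 a₄ * τ q.2 a₅))
    {ι : Type*} {l : Filter ι} {Λ₁ Λ₂ Λ₃ Λ₄ : ι → Set G}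
    (hΛ₁ : IsFolnerNet μ l Λ₁) (hΛ₂ : IsFolnerNet μ l Λ₂)
    (hΛ₃ : IsFolnerNet μ l Λ₃) (hΛ₄ : IsFolnerNet μ l Λ₄)
    {H : Type*} [NormedAddCommGroup H] [InnerProductSpace ℂ H] [CompleteSpace H]
    {j : A →ₗ[ℂ] H} (hj_dense : DenseRange j)
    (hj_inner : ∀ a b, (inner ℂ (j a) (j b) : ℂ) = ω (star a * b))
    {U : G → H →L[ℂ] H} (hU : ∀ g a, U g (j a) = j (τ g a)) (hU_contr : ∀ g, ‖U g‖ ≤ 1)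
    (a b c : A)
    (hflight : j a ∈ flightVectors U ∨ j b ∈ flightVectors U ∨ j (star c) ∈ flightVectors U) :
    (∀ g' h' : G, Tendsto
      (fun α => ((μ (Λ₁ α)).toReal * (μ (Λ₂ α)).toReal)⁻¹ •
        ∫ h in Λ₁ α, ∫ g in Λ₂ α,
          (inner ℂ (j (τ (g * h) a * τ g b * τ h c))
            (j (τ (g * g' * (h * h')) a * τ (g * g') b * τ (h * h') c)) : ℂ) ∂μ ∂μ)
      l (𝓝 (ω (star a * τ (g' * h') a) * ω (star b * τ g' b) * ω (τ h' c * star c)))) ∧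
    (Measurable fun q : G × G =>
      ω (star a * τ (q.1 * q.2) a) * ω (star b * τ q.1 b) * ω (τ q.2 c * star c)) ∧
    Tendsto
      (fun α => ((μ (Λ₃ α)).toReal * (μ (Λ₄ α)).toReal)⁻¹ *
        ∫ h in Λ₃ α, ∫ g in Λ₄ α,
          ‖ω (star a * τ (g * h) a) * ω (star b * τ g b) * ω (τ h c * star c)‖ ∂μ ∂μ)
      l (𝓝 0) := by
  obtain ⟨V, hVU, S⟩ := exists_isGNSSystem hω_one hτ_meas hj_dense hj_inner hU hU_contr
  obtain ⟨F, hF⟩ := hErg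
  refine ⟨fun g' h' => ?_, ?_, ?_⟩
  · have hlim := S.tendsto_integral_integral_state_correlation hω_tracial
      (fun y => S.eq_inner_smul_of_ergodicAlong F hF) hΛ₁.isReiterNet_cond hΛ₂.isReiterNet_cond
      (star c) (star b) (star a * τ (g' * h') a) (τ g' b) (τ h' c) (hmeas5 _ _ _ _ _)
    simpa only [integral_cond_integral_cond_eq_smul, ← S.inner_triple_eq, hω_tracial (τ g' b)]
      using hlim
  · simp only [hω_tracial (τ _ c)]
    exact (((hτ_meas (star a) a).comp measurable_mul).mul
      ((hτ_meas (star b) b).comp measurable_fst)).mul ((hτ_meas (star c) c).comp measurable_snd)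
  · have hle : flightVectors U ≤ (jointEigenspan V)ᗮ :=
      flightVectors_le_jointEigenspan_orthogonal hVU
    simpa only [integral_cond_integral_cond_eq_smul, smul_eq_mul, norm_mul,
      S.norm_state_star_mul, S.norm_state_mul_star] using
      hΛ₃.isReiterNet_cond.tendsto_integral_integral_norm_inner_mul hΛ₄.isReiterNet_cond
        S.measurable_inner (hflight.imp (@hle _) (.imp (@hle _) (@hle _)))

/-- **Lemma 5.3(1).** -/
theorem lemma_5_3_1
    -- a unital C*-algebra A
    {A : Type*} [NormedRing A] [StarRing A] [CStarRing A] [NormedAlgebra ℂ A]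
    [CompleteSpace A] [StarModule ℂ A]
    -- a tracial state ω on A
    (ω : A →ₗ[ℂ] ℂ) (hω_pos : ∀ a : A, 0 ≤ ω (star a * a)) (hω_one : ω 1 = 1)
    (hω_tracial : ∀ a b : A, ω (a * b) = ω (b * a))
    -- a right invariant measure group (G, Σ, μ) with G abelian
    {G : Type*} [CommGroup G] [MeasurableSpace G] (μ : Measure G)
    (hTrans : ∀ (V : Set G) (g : G), MeasurableSet V → MeasurableSet (V * {g}))
    (hRight : ∀ (V : Set G) (g : G), MeasurableSet V → μ (V * {g}) = μ V)
    (hInvMeas : Measurable (fun g : G => g⁻¹))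
    (hInvInv : ∀ V : Set G, MeasurableSet V → μ V⁻¹ = μ V)
    -- the product map p : G × G → G is measurable
    (hProdMeas : Measurable fun q : G × G => q.1 * q.2)
    -- the action τ, making (A, ω, τ, G) a C*-dynamical system (here K = G)
    (τ : G → A ≃⋆ₐ[ℂ] A)
    (hτ_one : ∀ a : A, τ 1 a = a)
    (hτ_mul : ∀ g h a, τ g (τ h a) = τ (g * h) a)
    (hω_inv : ∀ g a, ω (τ g a) = ω a)
    (hτ_meas : ∀ a b : A, Measurable fun g : G => ω (a * τ g b))
    -- g ↦ ‖[a, τ_g(b)]‖ is measurable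
    (hcomm_meas : ∀ a b : A, Measurable fun g : G => ‖a * τ g b - τ g b * a‖)
    -- the system is ergodic (w.r.t. some, equivalently every, Følner net in G)
    (hErg : ∃ F : FolnerNetIn μ (Set.univ : Set G), F.ErgodicAlong ω τ)
    -- (g,h) ↦ ω(τ_h(a₁) τ_g(a₂) τ_{gh}(a₃) τ_g(a₄) τ_h(a₅)) is (Σ × Σ)-measurable
    (hmeas5 : ∀ a₁ a₂ a₃ a₄ a₅ : A, Measurable fun q : G × G =>
      ω (τ q.2 a₁ * τ q.1 a₂ * τ (q.1 * q.2) a₃ * τ q.1 a₄ * τ q.2 a₅))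
    -- Følner nets (Λ1 α), (Λ2 α) in G indexed by the same directed set
    {ι : Type*} [Preorder ι] [Nonempty ι] [IsDirected ι (· ≤ ·)]
    (Λ1 Λ2 : ι → Set G)
    (hΛ1 : ∀ α, MeasurableSet (Λ1 α))
    (hΛ1fin : ∀ᶠ α in atTop, 0 < μ (Λ1 α) ∧ μ (Λ1 α) < ⊤)
    (hΛ1folner : ∀ g : G, Tendsto
      (fun α => (μ (symmDiff (Λ1 α) (Λ1 α * {g}))).toReal / (μ (Λ1 α)).toReal) atTop (𝓝 0))
    (hΛ2 : ∀ α, MeasurableSet (Λ2 α))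
    (hΛ2fin : ∀ᶠ α in atTop, 0 < μ (Λ2 α) ∧ μ (Λ2 α) < ⊤)
    (hΛ2folner : ∀ g : G, Tendsto
      (fun α => (μ (symmDiff (Λ2 α) (Λ2 α * {g}))).toReal / (μ (Λ2 α)).toReal) atTop (𝓝 0))
    -- the nets (Λ1 α⁻¹ Λ1 α) and (Λ2 α⁻¹ Λ2 α) are also Følner in G
    (hΛ1inv : ∀ᶠ α in atTop, MeasurableSet ((Λ1 α)⁻¹ * Λ1 α))
    (hΛ1invfin : ∀ᶠ α in atTop, 0 < μ ((Λ1 α)⁻¹ * Λ1 α) ∧ μ ((Λ1 α)⁻¹ * Λ1 α) < ⊤)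
    (hΛ1invfolner : ∀ g : G, Tendsto
      (fun α => (μ (symmDiff ((Λ1 α)⁻¹ * Λ1 α) (((Λ1 α)⁻¹ * Λ1 α) * {g}))).toReal /
        (μ ((Λ1 α)⁻¹ * Λ1 α)).toReal) atTop (𝓝 0))
    (hΛ2inv : ∀ᶠ α in atTop, MeasurableSet ((Λ2 α)⁻¹ * Λ2 α))
    (hΛ2invfin : ∀ᶠ α in atTop, 0 < μ ((Λ2 α)⁻¹ * Λ2 α) ∧ μ ((Λ2 α)⁻¹ * Λ2 α) < ⊤)
    (hΛ2invfolner : ∀ g : G, Tendsto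
      (fun α => (μ (symmDiff ((Λ2 α)⁻¹ * Λ2 α) (((Λ2 α)⁻¹ * Λ2 α) * {g}))).toReal /
        (μ ((Λ2 α)⁻¹ * Λ2 α)).toReal) atTop (𝓝 0))
    -- a GNS representation (H, j) of (A, ω), with U the GNS representation of τ
    {H : Type*} [NormedAddCommGroup H] [InnerProductSpace ℂ H] [CompleteSpace H]
    (j : A →ₗ[ℂ] H) (hj_dense : DenseRange j)
    (hj_inner : ∀ a b : A, (inner ℂ (j a) (j b) : ℂ) = ω (star a * b))
    (U : G → H →L[ℂ] H) (hU : ∀ g a, U g (j a) = j (τ g a)) (hU_contr : ∀ g, ‖U g‖ ≤ 1)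
    -- a, b, c ∈ A with at least one of ι(a), ι(b), ι(c*) a flight vector
    (a b c : A)
    (hflight : j a ∈ flightVectors U ∨ j b ∈ flightVectors U ∨ j (star c) ∈ flightVectors U)
    -- the system is asymptotically abelian with respect to (Λ1 α)
    (hAA : ∀ a' b' : A, Tendsto
      (fun α => (μ (Λ1 α)).toReal⁻¹ * ∫ g in Λ1 α, ‖a' * τ g b' - τ g b' * a'‖ ∂μ)
      atTop (𝓝 0)) :
    -- conclusion: the limit γ_{g',h'} exists and is given by (5.6); the resulting map
    -- (g, h) ↦ γ_{g,h} is (Σ × Σ)-measurable; and the averages of |γ| over the inverse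
    -- product sets tend to 0
    (∀ g' h' : G, Tendsto
      (fun α => ((μ (Λ1 α)).toReal * (μ (Λ2 α)).toReal)⁻¹ •
        ∫ h in Λ1 α, ∫ g in Λ2 α,
          (inner ℂ (j (τ (g * h) a * τ g b * τ h c))
            (j (τ (g * g' * (h * h')) a * τ (g * g') b * τ (h * h') c)) : ℂ) ∂μ ∂μ)
      atTop (𝓝 (ω (star a * τ (g' * h') a) * ω (star b * τ g' b) * ω (τ h' c * star c)))) ∧
    (Measurable fun q : G × G =>
      ω (star a * τ (q.1 * q.2) a) * ω (star b * τ q.1 b) * ω (τ q.2 c * star c)) ∧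
    Tendsto
      (fun α => ((μ ((Λ1 α)⁻¹ * Λ1 α)).toReal * (μ ((Λ2 α)⁻¹ * Λ2 α)).toReal)⁻¹ *
        ∫ h in (Λ1 α)⁻¹ * Λ1 α, ∫ g in (Λ2 α)⁻¹ * Λ2 α,
          ‖ω (star a * τ (g * h) a) * ω (star b * τ g b) * ω (τ h c * star c)‖ ∂μ ∂μ)
      atTop (𝓝 0) := by
  let : CStarAlgebra A := {}
  have : MeasurableMul₂ G := ⟨hProdMeas⟩
  have : μ.IsMulRightInvariant := isMulRightInvariant_of_measure_mul_singleton hRight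
  exact lemma_5_3_1_general hω_one hω_tracial
    (τ := .mk' τ fun g h => StarAlgEquiv.ext fun x => (hτ_mul g h x).symm) hτ_meas hErg hmeas5
    ⟨.of_forall hΛ1, hΛ1fin, hΛ1folner⟩ ⟨.of_forall hΛ2, hΛ2fin, hΛ2folner⟩
    ⟨hΛ1inv, hΛ1invfin, hΛ1invfolner⟩ ⟨hΛ2inv, hΛ2invfin, hΛ2invfolner⟩
    hj_dense hj_inner hU hU_contr a b c hflight
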